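/- Let X and Y be real Hilbert spaces, let T_n (n ∈ ℕ) and T be bounded linear maps from X to Y that are bounded below (isomorphisms onto their ranges), and let Q_n and Q be bounded idempotent operators on X, such that T_n → T and Q_n → Q in the operator norms. Then the subspaces range(T_n ∘ Q_n) and range(T ∘ Q) are closed, and the orthogonal projection of Y onto range(T_n ∘ Q_n) converges in the operator norm to the orthogonal projection of Y onto range(T ∘ Q). In particular (case Q_n = Q = I), the orthogonal projection onto range(T_n) converges in operator norm to the orthogonal projection onto range(T). -/

import Mathlib

open Filter

/-- `P` is the orthogonal projection of `Y` onto the subspace `E`. -/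
def IsOrthoProjOn {Y : Type*} [NormedAddCommGroup Y] [InnerProductSpace ℝ Y]
    (E : Submodule ℝ Y) (P : Y →L[ℝ] Y) : Prop :=
  ∀ y : Y, P y ∈ E ∧ y - P y ∈ Eᗮ

theorem aux_min {Y : Type*} [NormedAddCommGroup Y] [InnerProductSpace ℝ Y]
    {F : Submodule ℝ Y} {R : Y →L[ℝ] Y} (hR : IsOrthoProjOn F R) (v w : Y) (hw : w ∈ F) :
    ‖v - R v‖ ≤ ‖v - w‖ := by
  have h1 : inner ℝ (w - R v) (v - R v) = 0 :=
    (Submodule.mem_orthogonal F _).1 (hR v).2 _ (F.sub_mem hw (hR v).1)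
  have h2 : v - w = (v - R v) - (w - R v) := by abel
  have h3 : inner ℝ (v - R v) (v - w) = ‖v - R v‖ ^ 2 := by
    rw [h2, inner_sub_right, real_inner_comm, real_inner_self_eq_norm_sq, real_inner_comm, h1,
      sub_zero]
  have h4 := real_inner_le_norm (v - R v) (v - w)
  rw [h3] at h4
  by_contra hlt
  push Not at hlt
  nlinarith [norm_nonneg (v - w), norm_nonneg (v - R v)]

theorem aux_norm {Y : Type*} [NormedAddCommGroup Y] [InnerProductSpace ℝ Y]
    {E F : Submodule ℝ Y} {P R : Y →L[ℝ] Y} (hP : IsOrthoProjOn E P) (hR : IsOrthoProjOn F R)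
    {ε : ℝ} (hε : 0 ≤ ε) (h1 : ∀ v ∈ E, ‖v - R v‖ ≤ ε * ‖v‖)
    (h2 : ∀ v ∈ F, ‖v - P v‖ ≤ ε * ‖v‖) : ‖P - R‖ ≤ 2 * ε := by
  refine ContinuousLinearMap.opNorm_le_bound _ (by positivity) fun y => ?_
  have hz : ‖y - R y‖ ≤ ‖y‖ := by simpa using aux_min hR y 0 F.zero_mem
  have hRy : ‖R y‖ ≤ ‖y‖ := by
    have h : inner ℝ (R y) (y - R y) = 0 := (Submodule.mem_orthogonal F _).1 (hR y).2 _ (hR y).1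
    rw [inner_sub_right, real_inner_self_eq_norm_sq] at h
    have h4 := real_inner_le_norm (R y) y
    by_contra hlt
    push Not at hlt
    nlinarith [norm_nonneg (R y), norm_nonneg y]
  have hb := h2 (R y) (hR y).1
  have ha : ‖P (y - R y)‖ ≤ ε * ‖y‖ := by
    set z := y - R y with hzdef
    set w := P z with hw
    have e1 : inner ℝ w (z - w) = 0 := (Submodule.mem_orthogonal E _).1 (hP z).2 _ (hP z).1
    have e2 : inner ℝ (R w) z = 0 := (Submodule.mem_orthogonal F _).1 (hR y).2 _ (hR w).1
    rw [inner_sub_right, real_inner_self_eq_norm_sq] at e1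
    have e3 : inner ℝ (w - R w) z = ‖w‖ ^ 2 := by rw [inner_sub_left, e2]; linarith
    have e4 := real_inner_le_norm (w - R w) z
    have e5 := h1 w (hP z).1
    have e6 : ‖w - R w‖ * ‖z‖ ≤ (ε * ‖w‖) * ‖y‖ := by gcongr
    rcases (norm_nonneg w).eq_or_lt with h0 | h0
    · rw [← h0]; positivity
    · refine le_of_mul_le_mul_left ?_ h0
      nlinarith
  have : (P - R) y = P (y - R y) - (R y - P (R y)) := by
    simp
  rw [this]
  have := norm_sub_le (P (y - R y)) (R y - P (R y))
  have := mul_le_mul_of_nonneg_left hRy hε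
  linarith

theorem aux_gap {X Y : Type*} [NormedAddCommGroup X] [InnerProductSpace ℝ X]
    [NormedAddCommGroup Y] [InnerProductSpace ℝ Y]
    (T : X →L[ℝ] Y) (Q : X →L[ℝ] X) (B : X →L[ℝ] Y) (R : Y →L[ℝ] Y) (c : ℝ) (hc : 0 < c)
    (hT : ∀ x : X, c * ‖x‖ ≤ ‖T x‖) (hQ : Q.comp Q = Q)
    (hR : IsOrthoProjOn (LinearMap.range (B : X →ₗ[ℝ] Y)) R) :
    ∀ v ∈ LinearMap.range (T.comp Q : X →ₗ[ℝ] Y), ‖v - R v‖ ≤ (‖T.comp Q - B‖ / c) * ‖v‖ := by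
  rintro v ⟨x, rfl⟩
  have hq : Q (Q x) = Q x := congrArg (fun f : X →L[ℝ] X => f x) hQ
  refine (aux_min hR _ (B (Q x)) ⟨Q x, rfl⟩).trans ?_
  have e : (T.comp Q : X →ₗ[ℝ] Y) x - B (Q x) = (T.comp Q - B) (Q x) := by simp [hq]
  rw [e]
  refine ((T.comp Q - B).le_opNorm (Q x)).trans ?_
  have h := hT (Q x)
  rw [div_mul_eq_mul_div, le_div_iff₀ hc, mul_assoc]
  refine mul_le_mul_of_nonneg_left ?_ (norm_nonneg _)
  rw [mul_comm]
  exact h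

theorem aux_closed {X Y : Type*} [NormedAddCommGroup X] [InnerProductSpace ℝ X] [CompleteSpace X]
    [NormedAddCommGroup Y] [InnerProductSpace ℝ Y]
    (T : X →L[ℝ] Y) (Q : X →L[ℝ] X) (hT : ∃ c > 0, ∀ x : X, c * ‖x‖ ≤ ‖T x‖)
    (hQ : Q.comp Q = Q) :
    IsClosed ((LinearMap.range (T.comp Q : X →ₗ[ℝ] Y) : Submodule ℝ Y) : Set Y) := by
  obtain ⟨c, hc, h⟩ := hT
  have ha : AntilipschitzWith (Real.toNNReal c⁻¹) T := by
    refine AddMonoidHomClass.antilipschitz_of_bound T fun x => ?_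
    rw [Real.coe_toNNReal _ (by positivity), inv_mul_eq_div, le_div_iff₀ hc, mul_comm]
    exact h x
  have hcl : IsClosed {x : X | Q x = x} := isClosed_eq Q.continuous continuous_id
  have := (ha.isClosedEmbedding T.uniformContinuous).isClosedMap _ hcl
  convert this using 1
  ext y
  constructor
  · rintro ⟨x, rfl⟩
    exact ⟨Q x, congrArg (fun f : X →L[ℝ] X => f x) hQ, rfl⟩
  · rintro ⟨x, hx, rfl⟩
    exact ⟨x, congrArg T hx⟩

/-- If `Tₙ → T` (bounded-below maps between real Hilbert spaces) and `Qₙ → Q`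
(idempotents) in operator norm, then the ranges of `Tₙ ∘ Qₙ` and `T ∘ Q` are closed,
and the orthogonal projections onto `range (Tₙ ∘ Qₙ)` converge in operator norm
to the orthogonal projection onto `range (T ∘ Q)`. -/
theorem stmt3 {X Y : Type*} [NormedAddCommGroup X] [InnerProductSpace ℝ X] [CompleteSpace X]
    [NormedAddCommGroup Y] [InnerProductSpace ℝ Y] [CompleteSpace Y]
    (T : ℕ → X →L[ℝ] Y) (T₀ : X →L[ℝ] Y)
    (Q : ℕ → X →L[ℝ] X) (Q₀ : X →L[ℝ] X)
    (hTn : ∀ n, ∃ c > 0, ∀ x : X, c * ‖x‖ ≤ ‖T n x‖)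
    (hT₀ : ∃ c > 0, ∀ x : X, c * ‖x‖ ≤ ‖T₀ x‖)
    (hQn : ∀ n, (Q n).comp (Q n) = Q n) (hQ₀ : Q₀.comp Q₀ = Q₀)
    (hTconv : Tendsto T atTop (nhds T₀)) (hQconv : Tendsto Q atTop (nhds Q₀)) :
    (∀ n, IsClosed ((LinearMap.range ((T n).comp (Q n) : X →ₗ[ℝ] Y) : Submodule ℝ Y) : Set Y)) ∧
    IsClosed ((LinearMap.range (T₀.comp Q₀ : X →ₗ[ℝ] Y) : Submodule ℝ Y) : Set Y) ∧
    ∀ (P : ℕ → Y →L[ℝ] Y) (P₀ : Y →L[ℝ] Y),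
      (∀ n, IsOrthoProjOn (LinearMap.range ((T n).comp (Q n) : X →ₗ[ℝ] Y)) (P n)) →
      IsOrthoProjOn (LinearMap.range (T₀.comp Q₀ : X →ₗ[ℝ] Y)) P₀ →
      Tendsto P atTop (nhds P₀) := by
  refine ⟨fun n => aux_closed _ _ (hTn n) (hQn n), aux_closed _ _ hT₀ hQ₀, ?_⟩
  intro P P₀ hP hP₀
  obtain ⟨c, hc, h⟩ := hT₀
  have hA : Tendsto (fun n => (T n).comp (Q n)) atTop (nhds (T₀.comp Q₀)) :=
    ((isBoundedBilinearMap_comp (𝕜 := ℝ) (E := X) (F := X) (G := Y)).continuous.tendsto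
      (T₀, Q₀)).comp (hTconv.prodMk_nhds hQconv)
  have hA' := tendsto_iff_norm_sub_tendsto_zero.1 hA
  have hT' := tendsto_iff_norm_sub_tendsto_zero.1 hTconv
  rw [tendsto_iff_norm_sub_tendsto_zero]
  have hlim : Tendsto (fun n => 2 * (‖(T n).comp (Q n) - T₀.comp Q₀‖ / (c / 2))) atTop
      (nhds 0) := by
    simpa using (hA'.div_const (c / 2)).const_mul 2
  refine squeeze_zero' (Eventually.of_forall fun n => norm_nonneg _) ?_ hlim
  filter_upwards [hT'.eventually_lt_const (half_pos hc)] with n hn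
  have hTc : ∀ x : X, c / 2 * ‖x‖ ≤ ‖T n x‖ := fun x => by
    have h1 := (T n - T₀).le_of_opNorm_le hn.le x
    have h2 := h x
    have h3 := norm_sub_norm_le (T₀ x) (T n x)
    rw [norm_sub_rev] at h3
    rw [_root_.sub_apply] at h1
    linarith
  have hTc0 : ∀ x : X, c / 2 * ‖x‖ ≤ ‖T₀ x‖ := fun x => by
    have h2 := h x
    nlinarith [norm_nonneg x]
  refine aux_norm (hP n) hP₀ (by positivity)
    (aux_gap (T n) (Q n) _ P₀ (c / 2) (half_pos hc) hTc (hQn n) hP₀) ?_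
  rw [norm_sub_rev]
  exact aux_gap T₀ Q₀ _ (P n) (c / 2) (half_pos hc) hTc0 hQ₀ (hP n)
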